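/- Let X and Y be Polish spaces. The mutual information functional μ ↦ I(μ) := D(μ ‖ μ_X ⊗ μ_Y), defined on Borel probability measures μ on X × Y (where μ_X, μ_Y are the marginals of μ and D(·‖·) is relative entropy, taking values in [0, ∞]), is sequentially lower semicontinuous with respect to weak convergence: if μ_k → μ weakly, then liminf_k I(μ_k) ≥ I(μ). -/

import Mathlib

open MeasureTheory Filter

/-- Relative entropy (Kullback–Leibler divergence) `D(μ‖ν)`, with values in `(-∞, ∞]`:
`∫ log(dμ/dν) dμ` if `μ ≪ ν` (and the log-likelihood ratio is `μ`-integrable), `+∞`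
otherwise. -/
noncomputable def klDivergence {Z : Type*} [MeasurableSpace Z] (μ ν : Measure Z) : EReal :=
  open scoped Classical in
  if μ ≪ ν ∧ Integrable (llr μ ν) μ then ((∫ z, llr μ ν z ∂μ : ℝ) : EReal) else ⊤

/-- The mutual information of a joint probability measure `μ` on `X × Y`: the relative
entropy of `μ` with respect to the product of its own marginals. -/
noncomputable def mutualInfoM {X Y : Type*} [MeasurableSpace X] [MeasurableSpace Y]
    (μ : Measure (X × Y)) : EReal :=
  klDivergence μ ((μ.map Prod.fst).prod (μ.map Prod.snd))

/-
Relative entropy is the supremum of `∫ f dμ - ∫ (exp f - 1) dν` over bounded continuous `f`: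
Young's inequality `r y - exp y + 1 ≤ r log r + 1 - r` gives one direction, and truncations of
`log dμ/dν` (multiples of an indicator if `μ` is not absolutely continuous), approximated in
`L¹(μ + ν)` by continuous functions, give the other. For fixed `f` the expression is weakly
continuous in `(μ, ν)`, so relative entropy is jointly lower semicontinuous, and the pair
`(μ, μ_X ⊗ μ_Y)` depends weakly continuously on `μ`.
-/

open InformationTheory Topology
open scoped BoundedContinuousFunction ENNReal

section TruncatedLogarithm

/-- The logarithm of `r` clamped to `[exp (-n), exp n]`: a bounded approximation of `log` on
`[0, ∞)`. The argument is clamped rather than the value, so that the value at `0` is `-n` instead of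
the junk `Real.log 0 = 0`. -/
noncomputable def truncLog (n : ℕ) (r : ℝ) : ℝ :=
  Real.log (max (Real.exp (-n)) (min r (Real.exp n)))

lemma measurable_truncLog (n : ℕ) : Measurable (truncLog n) := by
  unfold truncLog
  fun_prop

lemma exp_truncLog (n : ℕ) (r : ℝ) :
    Real.exp (truncLog n r) = max (Real.exp (-n)) (min r (Real.exp n)) :=
  Real.exp_log (lt_max_of_lt_left (Real.exp_pos _))

lemma exp_neg_natCast_le_exp (n : ℕ) : Real.exp (-n) ≤ Real.exp n :=
  Real.exp_le_exp.2 (neg_le_self n.cast_nonneg)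

lemma truncLog_of_le {n : ℕ} {r : ℝ} (h : r ≤ Real.exp (-n)) : truncLog n r = -n := by
  rw [truncLog, max_eq_left ((min_le_left _ _).trans h), Real.log_exp]

lemma truncLog_of_ge {n : ℕ} {r : ℝ} (h : Real.exp n ≤ r) : truncLog n r = n := by
  rw [truncLog, min_eq_right h, max_eq_right (exp_neg_natCast_le_exp n), Real.log_exp]

lemma truncLog_of_mem_Icc {n : ℕ} {r : ℝ} (h : r ∈ Set.Icc (Real.exp (-n)) (Real.exp n)) :
    truncLog n r = Real.log r := by
  rw [truncLog, min_eq_left h.2, max_eq_right h.1]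

lemma abs_truncLog_le (n : ℕ) (r : ℝ) : |truncLog n r| ≤ n := by
  rw [abs_le, ← Real.exp_le_exp, ← Real.exp_le_exp (y := n), exp_truncLog]
  exact ⟨le_max_left _ _, max_le (exp_neg_natCast_le_exp n) (min_le_right _ _)⟩

lemma exp_truncLog_mul_truncLog_le (n : ℕ) (r : ℝ) :
    Real.exp (truncLog n r) * truncLog n r ≤ r * truncLog n r := by
  rcases le_total r (Real.exp (-n)) with hlow | hlow
  · rw [truncLog_of_le hlow]
    exact mul_le_mul_of_nonpos_right hlow (neg_nonpos.2 n.cast_nonneg)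
  rcases le_total r (Real.exp n) with hhigh | hhigh
  · rw [truncLog_of_mem_Icc ⟨hlow, hhigh⟩, Real.exp_log ((Real.exp_pos _).trans_le hlow)]
  · rw [truncLog_of_ge hhigh]
    exact mul_le_mul_of_nonneg_right hhigh n.cast_nonneg

lemma mul_truncLog_sub_exp_sub_one_nonneg (n : ℕ) (r : ℝ) :
    0 ≤ r * truncLog n r - (Real.exp (truncLog n r) - 1) := by
  have hklFun := klFun_nonneg (Real.exp_pos (truncLog n r)).le
  rw [klFun_apply, Real.log_exp] at hklFun
  linarith [exp_truncLog_mul_truncLog_le n r]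

lemma tendsto_mul_truncLog_sub_exp_sub_one {r : ℝ} (hr : 0 ≤ r) :
    Tendsto (fun n : ℕ ↦ r * truncLog n r - (Real.exp (truncLog n r) - 1)) atTop
      (𝓝 (klFun r)) := by
  have hexp_neg : Tendsto (fun n : ℕ ↦ Real.exp (-n)) atTop (𝓝 0) :=
    Real.tendsto_exp_neg_atTop_nhds_zero.comp tendsto_natCast_atTop_atTop
  rcases hr.eq_or_lt with rfl | hr
  · simpa [truncLog_of_le (Real.exp_pos _).le, klFun_zero] using hexp_neg.const_sub 1
  · have hexp : Tendsto (fun n : ℕ ↦ Real.exp n) atTop atTop :=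
      Real.tendsto_exp_atTop.comp tendsto_natCast_atTop_atTop
    refine tendsto_const_nhds.congr' ?_
    filter_upwards [hexp_neg.eventually_le_const hr, hexp.eventually_ge_atTop r] with n hlow hhigh
    rw [truncLog_of_mem_Icc ⟨hlow, hhigh⟩, Real.exp_log hr, klFun_apply]
    ring

end TruncatedLogarithm

section Inequalities

lemma mul_sub_exp_sub_one_le_klFun {r : ℝ} (hr : 0 ≤ r) (y : ℝ) :
    r * y - (Real.exp y - 1) ≤ klFun r := by
  rw [klFun_apply]
  rcases hr.eq_or_lt with rfl | hr
  · simp [(Real.exp_pos y).le]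
  · have hexp := Real.add_one_le_exp (y - Real.log r)
    rw [Real.exp_sub, Real.exp_log hr, le_div_iff₀ hr] at hexp
    linarith

lemma exp_sub_exp_le_exp_mul_abs_sub {M a b : ℝ} (hb : b ≤ M) :
    Real.exp b - Real.exp a ≤ Real.exp M * |a - b| := by
  calc
    Real.exp b - Real.exp a = Real.exp b * (1 - Real.exp (a - b)) := by
        rw [mul_sub, mul_one, ← Real.exp_add, add_sub_cancel]
    _ ≤ Real.exp b * |a - b| := by
        gcongr
        linarith [Real.add_one_le_exp (a - b), neg_le_abs (a - b)]
    _ ≤ Real.exp M * |a - b| := by gcongr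

lemma ofReal_integral_le_lintegral_ofReal {Z : Type*} [MeasurableSpace Z] {μ : Measure Z}
    {f : Z → ℝ} (hf : Integrable f μ) :
    ENNReal.ofReal (∫ z, f z ∂μ) ≤ ∫⁻ z, ENNReal.ofReal (f z) ∂μ := by
  rw [integral_eq_lintegral_pos_part_sub_lintegral_neg_part hf]
  exact (ENNReal.ofReal_le_ofReal (sub_le_self _ ENNReal.toReal_nonneg)).trans
    ENNReal.ofReal_toReal_le

end Inequalities

section DualFunctional

variable {Z : Type*} [MeasurableSpace Z] {μ ν : Measure Z} {f g : Z → ℝ} {M : ℝ}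

/-- The functional `f ↦ ∫ f dμ - ∫ (exp f - 1) dν`, whose supremum over test functions is the
relative entropy of `μ` with respect to `ν`. The convex conjugate `exp - 1` of `klFun` is used in
place of the Donsker-Varadhan term `log ∫ exp f dν`, so that the supremum is `klDiv μ ν` for
measures of any finite mass. -/
noncomputable def klDual (μ ν : Measure Z) (f : Z → ℝ) : ℝ :=
  ∫ z, f z ∂μ - ∫ z, (Real.exp (f z) - 1) ∂ν

lemma integrable_of_abs_le [IsFiniteMeasure μ] (hf : Measurable f) (hM : ∀ z, |f z| ≤ M) :
    Integrable f μ :=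
  .of_bound hf.aestronglyMeasurable M (ae_of_all _ hM)

lemma integrable_exp_sub_one_of_abs_le [IsFiniteMeasure μ] (hf : Measurable f)
    (hM : ∀ z, |f z| ≤ M) : Integrable (fun z ↦ Real.exp (f z) - 1) μ := by
  have hexp : Integrable (fun z ↦ Real.exp (f z)) μ := integrable_of_abs_le hf.exp fun z ↦ by
    rw [Real.abs_exp]
    exact Real.exp_le_exp.2 (le_of_abs_le (hM z))
  exact hexp.sub (integrable_const 1)

lemma integrable_rnDeriv_mul_sub_exp_sub_one [SigmaFinite μ]
    [μ.HaveLebesgueDecomposition ν] (hμν : μ ≪ ν) (hf : Integrable f μ)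
    (hexp : Integrable (fun z ↦ Real.exp (f z) - 1) ν) :
    Integrable (fun z ↦ (μ.rnDeriv ν z).toReal * f z - (Real.exp (f z) - 1)) ν :=
  ((integrable_rnDeriv_smul_iff hμν).2 hf).sub hexp

lemma klDual_eq_integral_rnDeriv [SigmaFinite μ] [μ.HaveLebesgueDecomposition ν]
    (hμν : μ ≪ ν) (hf : Integrable f μ)
    (hexp : Integrable (fun z ↦ Real.exp (f z) - 1) ν) :
    klDual μ ν f = ∫ z, ((μ.rnDeriv ν z).toReal * f z - (Real.exp (f z) - 1)) ∂ν := by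
  rw [klDual, ← integral_rnDeriv_smul hμν,
    ← integral_sub ((integrable_rnDeriv_smul_iff hμν).2 hf) hexp]
  simp only [smul_eq_mul]

theorem ofReal_klDual_le_klDiv [IsFiniteMeasure μ] [IsFiniteMeasure ν] (hf : Integrable f μ)
    (hexp : Integrable (fun z ↦ Real.exp (f z) - 1) ν) :
    ENNReal.ofReal (klDual μ ν f) ≤ klDiv μ ν := by
  by_cases hμν : μ ≪ ν
  · rw [klDiv_eq_lintegral_klFun_of_ac hμν, klDual_eq_integral_rnDeriv hμν hf hexp]
    refine (ofReal_integral_le_lintegral_ofReal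
      (integrable_rnDeriv_mul_sub_exp_sub_one hμν hf hexp)).trans (lintegral_mono fun z ↦ ?_)
    exact ENNReal.ofReal_le_ofReal (mul_sub_exp_sub_one_le_klFun ENNReal.toReal_nonneg (f z))
  · simp only [klDiv_of_not_ac hμν, le_top]

lemma klDiv_le_liminf_klDual_truncLog [IsFiniteMeasure μ] [IsFiniteMeasure ν] (hμν : μ ≪ ν) :
    klDiv μ ν ≤ liminf (fun n : ℕ ↦
      ENNReal.ofReal (klDual μ ν fun z ↦ truncLog n (μ.rnDeriv ν z).toReal)) atTop := by
  let r : Z → ℝ := fun z ↦ (μ.rnDeriv ν z).toReal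
  let φ : ℕ → Z → ℝ := fun n z ↦ r z * truncLog n (r z) - (Real.exp (truncLog n (r z)) - 1)
  have hr : Measurable r := (μ.measurable_rnDeriv ν).ennreal_toReal
  have hlog (n : ℕ) : Measurable fun z ↦ truncLog n (r z) := (measurable_truncLog n).comp hr
  have hφ (n : ℕ) : Measurable (φ n) := (hr.mul (hlog n)).sub ((hlog n).exp.sub_const 1)
  have hbound (n : ℕ) (z : Z) : |truncLog n (r z)| ≤ n := abs_truncLog_le n (r z)
  have hdual (n : ℕ) :
      ∫⁻ z, ENNReal.ofReal (φ n z) ∂ν = ENNReal.ofReal (klDual μ ν fun z ↦ truncLog n (r z)) := by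
    have hint : Integrable (fun z ↦ truncLog n (r z)) μ := integrable_of_abs_le (hlog n) (hbound n)
    have hexp := integrable_exp_sub_one_of_abs_le (μ := ν) (hlog n) (hbound n)
    rw [klDual_eq_integral_rnDeriv hμν hint hexp, ofReal_integral_eq_lintegral_ofReal
      (integrable_rnDeriv_mul_sub_exp_sub_one hμν hint hexp)
      (ae_of_all _ fun z ↦ mul_truncLog_sub_exp_sub_one_nonneg n (r z))]
  calc klDiv μ ν = ∫⁻ z, ENNReal.ofReal (klFun (r z)) ∂ν := klDiv_eq_lintegral_klFun_of_ac hμν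
    _ = ∫⁻ z, liminf (fun n ↦ ENNReal.ofReal (φ n z)) atTop ∂ν :=
        lintegral_congr fun z ↦ (ENNReal.tendsto_ofReal
          (tendsto_mul_truncLog_sub_exp_sub_one ENNReal.toReal_nonneg)).liminf_eq.symm
    _ ≤ liminf (fun n ↦ ∫⁻ z, ENNReal.ofReal (φ n z) ∂ν) atTop :=
        lintegral_liminf_le fun n ↦ (hφ n).ennreal_ofReal
    _ = _ := by simp only [hdual, r]

lemma klDual_indicator_const {A : Set Z} (hA : MeasurableSet A) (hν : ν A = 0) (t : ℝ) :
    klDual μ ν (A.indicator fun _ ↦ t) = μ.real A * t := by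
  have hexp : ∫ z, (Real.exp (A.indicator (fun _ ↦ t) z) - 1) ∂ν = 0 := by
    refine integral_eq_zero_of_ae ?_
    filter_upwards [measure_eq_zero_iff_ae_notMem.1 hν] with z hz
    simp [hz]
  rw [klDual, hexp, sub_zero, integral_indicator_const _ hA, smul_eq_mul]

lemma exists_indicator_lt_klDual_of_not_ac [IsFiniteMeasure μ] (hμν : ¬ μ ≪ ν) (c : ℝ) :
    ∃ A, MeasurableSet A ∧ ∃ t : ℝ, c < klDual μ ν (A.indicator fun _ ↦ t) := by
  obtain ⟨A, hA, hνA, hμA⟩ : ∃ A, MeasurableSet A ∧ ν A = 0 ∧ μ A ≠ 0 := by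
    by_contra! h
    exact hμν (.mk h)
  have hpos : 0 < μ.real A := ENNReal.toReal_pos hμA (measure_ne_top _ _)
  refine ⟨A, hA, (c + 1) / μ.real A, ?_⟩
  rw [klDual_indicator_const hA hνA, mul_div_cancel₀ _ hpos.ne']
  exact lt_add_one c

theorem exists_bounded_measurable_lt_klDual [IsFiniteMeasure μ] [IsFiniteMeasure ν] {c : ℝ≥0∞}
    (hc : c < klDiv μ ν) :
    ∃ f : Z → ℝ, ∃ M, Measurable f ∧ (∀ z, |f z| ≤ M) ∧ c < ENNReal.ofReal (klDual μ ν f) := by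
  by_cases hμν : μ ≪ ν
  · obtain ⟨n, hn⟩ :=
      (eventually_lt_of_lt_liminf (hc.trans_le (klDiv_le_liminf_klDual_truncLog hμν))).exists
    exact ⟨_, n, (measurable_truncLog n).comp (μ.measurable_rnDeriv ν).ennreal_toReal,
      fun z ↦ abs_truncLog_le n _, hn⟩
  · obtain ⟨A, hA, t, ht⟩ := exists_indicator_lt_klDual_of_not_ac hμν c.toReal
    refine ⟨A.indicator fun _ ↦ t, |t|, measurable_const.indicator hA, fun z ↦ ?_,
      (ENNReal.lt_ofReal_iff_toReal_lt hc.ne_top).2 ht⟩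
    by_cases hz : z ∈ A <;> simp [hz]

lemma klDual_sub_klDual_le [IsFiniteMeasure μ] [IsFiniteMeasure ν] (hf : Measurable f)
    (hg : Measurable g) (hfM : ∀ z, |f z| ≤ M) (hgM : ∀ z, |g z| ≤ M) :
    klDual μ ν f - klDual μ ν g ≤ (1 + Real.exp M) * ∫ z, |f z - g z| ∂(μ + ν) := by
  have hint (ρ : Measure Z) [IsFiniteMeasure ρ] : Integrable (fun z ↦ f z - g z) ρ :=
    (integrable_of_abs_le hf hfM).sub (integrable_of_abs_le hg hgM)
  have hlinear : ∫ z, f z ∂μ - ∫ z, g z ∂μ ≤ ∫ z, |f z - g z| ∂μ := by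
    rw [← integral_sub (integrable_of_abs_le hf hfM) (integrable_of_abs_le hg hgM)]
    exact integral_mono (hint μ) (hint μ).abs fun z ↦ le_abs_self _
  have hexp : ∫ z, (Real.exp (g z) - 1) ∂ν - ∫ z, (Real.exp (f z) - 1) ∂ν
      ≤ Real.exp M * ∫ z, |f z - g z| ∂ν := by
    have hexpf := integrable_exp_sub_one_of_abs_le (μ := ν) hf hfM
    have hexpg := integrable_exp_sub_one_of_abs_le (μ := ν) hg hgM
    rw [← integral_sub hexpg hexpf, ← integral_const_mul]
    refine integral_mono (hexpg.sub hexpf) ((hint ν).abs.const_mul _) fun z ↦ ?_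
    simpa using exp_sub_exp_le_exp_mul_abs_sub (a := f z) (le_of_abs_le (hgM z))
  have hμ_nonneg : 0 ≤ ∫ z, |f z - g z| ∂μ := integral_nonneg fun z ↦ abs_nonneg _
  have hν_nonneg : 0 ≤ ∫ z, |f z - g z| ∂ν := integral_nonneg fun z ↦ abs_nonneg _
  rw [integral_add_measure (hint μ).abs (hint ν).abs, klDual, klDual]
  linarith [mul_nonneg (Real.exp_pos M).le hμ_nonneg]

end DualFunctional

section BoundedContinuousTestFunctions

variable {Z : Type*} [TopologicalSpace Z] [MeasurableSpace Z]

lemma exists_boundedContinuous_abs_le_integral_abs_sub_le [NormalSpace Z] [BorelSpace Z]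
    {ρ : Measure Z} [IsFiniteMeasure ρ] [ρ.WeaklyRegular] {f : Z → ℝ} {M ε : ℝ}
    (hf : Measurable f) (hM : ∀ z, |f z| ≤ M) (hε : 0 < ε) :
    ∃ g : Z →ᵇ ℝ, (∀ z, |g z| ≤ M) ∧ ∫ z, |f z - g z| ∂ρ ≤ ε := by
  have hint : Integrable f ρ := integrable_of_abs_le hf hM
  obtain ⟨g, hg, hgint⟩ := hint.exists_boundedContinuous_integral_sub_le hε
  let clip : Z →ᵇ ℝ := (g ⊓ .const Z M) ⊔ .const Z (-M)
  have hclip (z : Z) : clip z = max (min (g z) M) (-M) := rfl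
  have hclipM (z : Z) : |clip z| ≤ M :=
    abs_le.2 ⟨le_max_right _ _, max_le (min_le_right _ _)
      (neg_le_self ((abs_nonneg _).trans (hM z)))⟩
  have hcontract (z : Z) : |f z - clip z| ≤ |f z - g z| := by
    have hfz : max (min (f z) M) (-M) = f z := by
      rw [min_eq_left (le_of_abs_le (hM z)), max_eq_left (neg_le_of_abs_le (hM z))]
    calc |f z - clip z| = |max (min (f z) M) (-M) - max (min (g z) M) (-M)| := by rw [hfz, hclip]
      _ ≤ |min (f z) M - min (g z) M| := abs_max_sub_max_le_abs _ _ _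
      _ ≤ |f z - g z| := by simpa using abs_min_sub_min_le_max (f z) M (g z) M
  exact ⟨clip, hclipM, (integral_mono (hint.sub (clip.integrable ρ)).abs (hint.sub hgint).abs
    hcontract).trans hg⟩

lemma exists_boundedContinuous_lt_klDual [NormalSpace Z] [BorelSpace Z] {μ ν : Measure Z}
    [IsFiniteMeasure μ] [IsFiniteMeasure ν] [(μ + ν).WeaklyRegular] {f : Z → ℝ} {M c : ℝ}
    (hf : Measurable f) (hM : ∀ z, |f z| ≤ M) (hc : c < klDual μ ν f) :
    ∃ g : Z →ᵇ ℝ, c < klDual μ ν g := by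
  obtain ⟨ε, hε, hεc⟩ : ∃ ε > 0, (1 + Real.exp M) * ε < klDual μ ν f - c :=
    exists_pos_mul_lt (sub_pos.2 hc) _
  obtain ⟨g, hgM, hfg⟩ :=
    exists_boundedContinuous_abs_le_integral_abs_sub_le (ρ := μ + ν) hf hM hε
  have hsub := klDual_sub_klDual_le (μ := μ) (ν := ν) hf g.continuous.measurable hM hgM
  have hle : (1 + Real.exp M) * ∫ z, |f z - g z| ∂(μ + ν) ≤ (1 + Real.exp M) * ε := by gcongr
  exact ⟨g, by linarith⟩

theorem klDiv_eq_iSup_klDual [NormalSpace Z] [BorelSpace Z] (μ ν : Measure Z)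
    [IsFiniteMeasure μ] [IsFiniteMeasure ν] [(μ + ν).WeaklyRegular] :
    klDiv μ ν = ⨆ f : Z →ᵇ ℝ, ENNReal.ofReal (klDual μ ν f) := by
  refine le_antisymm (le_of_forall_lt fun c hc ↦ ?_) (iSup_le fun f ↦ ?_)
  · obtain ⟨f, M, hf, hM, hcf⟩ := exists_bounded_measurable_lt_klDual hc
    rw [ENNReal.lt_ofReal_iff_toReal_lt hc.ne_top] at hcf
    obtain ⟨g, hcg⟩ := exists_boundedContinuous_lt_klDual hf hM hcf
    exact lt_iSup_iff.2 ⟨g, (ENNReal.lt_ofReal_iff_toReal_lt hc.ne_top).2 hcg⟩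
  · exact ofReal_klDual_le_klDiv (f.integrable μ)
      (integrable_exp_sub_one_of_abs_le f.continuous.measurable f.norm_coe_le_norm)

lemma continuous_klDual [OpensMeasurableSpace Z] (f : Z →ᵇ ℝ) :
    Continuous fun p : FiniteMeasure Z × FiniteMeasure Z ↦
      klDual p.1.toMeasure p.2.toMeasure f := by
  let expSubOne : Z →ᵇ ℝ := .ofNormedAddCommGroup (fun z ↦ Real.exp (f z) - 1) (by fun_prop)
    (Real.exp ‖f‖ + 1) fun z ↦ (norm_sub_le _ _).trans <| by
      simpa using le_of_abs_le (f.norm_coe_le_norm z)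
  exact ((FiniteMeasure.continuous_integral_boundedContinuousFunction f).comp continuous_fst).sub
    ((FiniteMeasure.continuous_integral_boundedContinuousFunction expSubOne).comp continuous_snd)

theorem lowerSemicontinuous_klDiv [TopologicalSpace.PseudoMetrizableSpace Z] [BorelSpace Z] :
    LowerSemicontinuous fun p : FiniteMeasure Z × FiniteMeasure Z ↦
      klDiv p.1.toMeasure p.2.toMeasure := by
  simp only [klDiv_eq_iSup_klDual]
  exact lowerSemicontinuous_iSup fun f ↦
    (ENNReal.continuous_ofReal.comp (continuous_klDual f)).lowerSemicontinuous

end BoundedContinuousTestFunctions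

section MutualInformation

lemma klDivergence_eq_coe_klDiv {Z : Type*} [MeasurableSpace Z] {μ ν : Measure Z}
    [IsFiniteMeasure μ] [IsFiniteMeasure ν] (hmass : μ Set.univ = ν Set.univ) :
    klDivergence μ ν = (klDiv μ ν : EReal) := by
  unfold klDivergence
  split_ifs with h
  · rw [← EReal.coe_ennreal_toReal (klDiv_ne_top h.1 h.2), toReal_klDiv_of_measure_eq h.1 hmass]
  · rw [klDiv_eq_top_iff.2 fun hac hint ↦ h ⟨hac, hint⟩, EReal.coe_ennreal_top]

theorem stmt6_general {X Y : Type*}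
    [TopologicalSpace X] [TopologicalSpace.PseudoMetrizableSpace X] [SecondCountableTopology X]
    [MeasurableSpace X] [BorelSpace X]
    [TopologicalSpace Y] [TopologicalSpace.PseudoMetrizableSpace Y] [SecondCountableTopology Y]
    [MeasurableSpace Y] [BorelSpace Y] :
    LowerSemicontinuous fun μ : ProbabilityMeasure (X × Y) ↦ mutualInfoM μ.toMeasure := by
  let marginalProd (μ : ProbabilityMeasure (X × Y)) : ProbabilityMeasure (X × Y) :=
    (μ.map continuous_fst.measurable.aemeasurable).prod
      (μ.map continuous_snd.measurable.aemeasurable)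
  have hmarginalProd : Continuous marginalProd := ProbabilityMeasure.continuous_prod.comp
    ((ProbabilityMeasure.continuous_map continuous_fst).prodMk
      (ProbabilityMeasure.continuous_map continuous_snd))
  have hpair : Continuous fun μ ↦ (μ.toFiniteMeasure, (marginalProd μ).toFiniteMeasure) :=
    ProbabilityMeasure.toFiniteMeasure_continuous.prodMk
      (ProbabilityMeasure.toFiniteMeasure_continuous.comp hmarginalProd)
  have hmutualInfo (μ : ProbabilityMeasure (X × Y)) :
      mutualInfoM μ.toMeasure = (klDiv μ.toMeasure (marginalProd μ).toMeasure : EReal) :=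
    klDivergence_eq_coe_klDiv (ν := (marginalProd μ).toMeasure) (by simp only [measure_univ])
  simp only [hmutualInfo]
  exact continuous_coe_ennreal_ereal.comp_lowerSemicontinuous
    (lowerSemicontinuous_klDiv.comp hpair) EReal.coe_ennreal_strictMono.monotone

end MutualInformation

/-- Let `X` and `Y` be Polish spaces.  The mutual information functional
`μ ↦ I(μ) = D(μ ‖ μ_X ⊗ μ_Y)` on Borel probability measures on `X × Y` is sequentially
lower semicontinuous for the topology of weak convergence: if `μ_k → μ` weakly then
`liminf_k I(μ_k) ≥ I(μ)`. -/
theorem stmt6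
    {X Y : Type*}
    [TopologicalSpace X] [PolishSpace X] [MeasurableSpace X] [BorelSpace X]
    [TopologicalSpace Y] [PolishSpace Y] [MeasurableSpace Y] [BorelSpace Y]
    (μs : ℕ → ProbabilityMeasure (X × Y)) (μ : ProbabilityMeasure (X × Y))
    (hconv : Tendsto μs atTop (nhds μ)) :
    mutualInfoM μ.toMeasure ≤ Filter.liminf (fun k => mutualInfoM (μs k).toMeasure) atTop := by
  exact (stmt6_general.le_liminf μ).trans (liminf_le_liminf_of_le hconv)
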